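/- Let U be a unitary operator on a complex Hilbert space H and f ∈ H. Then U⁻¹f belongs to the closed linear span of {Uⁿf : n ≥ 0} if and only if the closed linear span of {Uⁿf : n ≥ 0} equals the closed linear span of {U^{−n}f : n ≥ 0} (i.e. the cyclic subspace of f under U coincides with its cyclic subspace under U⁻¹). -/

import Mathlib

/-!
If two families `v`, `w` satisfy `⟪w i, w j⟫ = ⟪v j, v i⟫`, then `∑ cᵢ vᵢ ↦ ∑ c̄ᵢ wᵢ` is an
antilinear isometry between their spans. Since `U` preserves inner products, this applies to
`vₙ = Uⁿ f` and `wₙ = U⁻ⁿ f`, `n ∈ ℤ`: approximating `U⁻¹ f` by polynomials in `U` applied to `f`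
is the same as approximating `U f` by polynomials in `U⁻¹` applied to `f`. Hence
`U⁻¹ f ∈ C_{f,U}` gives `U f ∈ C_{f,U⁻¹}`, and each of the two memberships makes one of the cyclic
subspaces invariant under the inverse operator, hence contain the other.
-/

open scoped InnerProductSpace ComplexConjugate

section TransposedGram

variable {𝕜 E F ι : Type*} [RCLike 𝕜] [SeminormedAddCommGroup E] [InnerProductSpace 𝕜 E]
  [SeminormedAddCommGroup F] [InnerProductSpace 𝕜 F] {v : ι → E} {w : ι → F}

theorem norm_sum_conj_smul_eq_of_inner_eq (h : ∀ i j, ⟪w i, w j⟫_𝕜 = ⟪v j, v i⟫_𝕜)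
    (s : Finset ι) (c : ι → 𝕜) : ‖∑ i ∈ s, conj (c i) • w i‖ = ‖∑ i ∈ s, c i • v i‖ := by
  have inner_eq : ⟪∑ i ∈ s, conj (c i) • w i, ∑ i ∈ s, conj (c i) • w i⟫_𝕜 =
      ⟪∑ i ∈ s, c i • v i, ∑ i ∈ s, c i • v i⟫_𝕜 := by
    simp only [sum_inner, inner_sum, inner_smul_left, inner_smul_right, h, RCLike.conj_conj,
      Finset.mul_sum]
    rw [Finset.sum_comm]
    simp only [mul_left_comm]
  rw [norm_eq_sqrt_re_inner (𝕜 := 𝕜), inner_eq, ← norm_eq_sqrt_re_inner]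

theorem norm_linearCombination_mapRange_conj_eq_of_inner_eq
    (h : ∀ i j, ⟪w i, w j⟫_𝕜 = ⟪v j, v i⟫_𝕜) (c : ι →₀ 𝕜) :
    ‖Finsupp.linearCombination 𝕜 w (c.mapRange conj (map_zero _))‖ =
      ‖Finsupp.linearCombination 𝕜 v c‖ := by
  rw [Finsupp.linearCombination_apply, Finsupp.sum_mapRange_index fun i ↦ zero_smul 𝕜 (w i)]
  exact norm_sum_conj_smul_eq_of_inner_eq h c.support c

theorem mem_closure_span_image_of_inner_eq (h : ∀ i j, ⟪w i, w j⟫_𝕜 = ⟪v j, v i⟫_𝕜)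
    {s : Set ι} {i : ι} (hi : v i ∈ (Submodule.span 𝕜 (v '' s)).topologicalClosure) :
    w i ∈ (Submodule.span 𝕜 (w '' s)).topologicalClosure := by
  rw [← SetLike.mem_coe, Submodule.topologicalClosure_coe,
    SeminormedAddCommGroup.mem_closure_iff] at hi ⊢
  intro ε hε
  obtain ⟨y, hy, hlt⟩ := hi ε hε
  obtain ⟨c, hc, rfl⟩ := (Finsupp.mem_span_image_iff_linearCombination 𝕜).1 hy
  let c' : ι →₀ 𝕜 := c.mapRange conj (map_zero _)
  have hc' : c' ∈ Finsupp.supported 𝕜 𝕜 s :=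
    (Finset.coe_subset.2 Finsupp.support_mapRange).trans hc
  have conj_sub_eq : (Finsupp.single i 1 - c).mapRange conj (map_zero _) =
      Finsupp.single i 1 - c' := by
    rw [Finsupp.mapRange_sub (map_sub (starRingEnd 𝕜)), Finsupp.mapRange_single, map_one]
  have norm_sub_eq : ‖w i - Finsupp.linearCombination 𝕜 w c'‖ =
      ‖v i - Finsupp.linearCombination 𝕜 v c‖ := by
    have norm_eq := norm_linearCombination_mapRange_conj_eq_of_inner_eq h (Finsupp.single i 1 - c)
    rwa [conj_sub_eq, map_sub, map_sub, Finsupp.linearCombination_single,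
      Finsupp.linearCombination_single, one_smul, one_smul] at norm_eq
  exact ⟨Finsupp.linearCombination 𝕜 w c',
    (Finsupp.mem_span_image_iff_linearCombination 𝕜).2 ⟨c', hc', rfl⟩, norm_sub_eq.trans_lt hlt⟩

end TransposedGram

section CyclicSubspace

variable {𝕜 E : Type*} [Semiring 𝕜] [SeminormedAddCommGroup E] [Module 𝕜 E]
  [ContinuousConstSMul 𝕜 E] {U : E ≃ₗᵢ[𝕜] E} {f : E}

/-- The cyclic subspace `C_{f,U}` of `f` under `U`, as a submodule: the closed linear span of the
forward orbit `{Uⁿ f : n ≥ 0}`. -/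
def cyclicSubspace (U : E ≃ₗᵢ[𝕜] E) (f : E) : Submodule 𝕜 E :=
  (Submodule.span 𝕜 (Set.range fun n : ℕ ↦ (U ^ n) f)).topologicalClosure

theorem pow_apply_mem_cyclicSubspace (U : E ≃ₗᵢ[𝕜] E) (f : E) (n : ℕ) :
    (U ^ n) f ∈ cyclicSubspace U f :=
  Submodule.le_topologicalClosure _ (Submodule.subset_span ⟨n, rfl⟩)

theorem isClosed_cyclicSubspace (U : E ≃ₗᵢ[𝕜] E) (f : E) :
    IsClosed (cyclicSubspace U f : Set E) :=
  Submodule.isClosed_topologicalClosure _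

theorem cyclicSubspace_le {K : Submodule 𝕜 E} (hK : IsClosed (K : Set E))
    (hpow : ∀ n : ℕ, (U ^ n) f ∈ K) : cyclicSubspace U f ≤ K :=
  Submodule.topologicalClosure_minimal _
    (Submodule.span_le.2 (Set.range_subset_iff.2 hpow)) hK

theorem inv_apply_mem_cyclicSubspace (hf : U⁻¹ f ∈ cyclicSubspace U f) {x : E}
    (hx : x ∈ cyclicSubspace U f) : U⁻¹ x ∈ cyclicSubspace U f := by
  suffices cyclicSubspace U f ≤
      (cyclicSubspace U f).comap (U⁻¹).toLinearEquiv.toLinearMap from this hx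
  refine cyclicSubspace_le ((isClosed_cyclicSubspace U f).preimage (U⁻¹).continuous) fun n ↦ ?_
  change (U⁻¹ * U ^ n) f ∈ cyclicSubspace U f
  cases n with
  | zero => simpa only [pow_zero, mul_one] using hf
  | succ n =>
    rw [pow_succ', inv_mul_cancel_left]
    exact pow_apply_mem_cyclicSubspace U f n

theorem cyclicSubspace_inv_le_iff :
    cyclicSubspace U⁻¹ f ≤ cyclicSubspace U f ↔ U⁻¹ f ∈ cyclicSubspace U f := by
  constructor
  · intro hle
    simpa only [pow_one] using hle (pow_apply_mem_cyclicSubspace U⁻¹ f 1)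
  · intro hf
    refine cyclicSubspace_le (isClosed_cyclicSubspace U f) fun n ↦ ?_
    induction n with
    | zero => exact pow_apply_mem_cyclicSubspace U f 0
    | succ n ih =>
      rw [pow_succ']
      exact inv_apply_mem_cyclicSubspace hf ih

theorem cyclicSubspace_eq_closure_span_zpow (U : E ≃ₗᵢ[𝕜] E) (f : E) :
    cyclicSubspace U f = (Submodule.span 𝕜
      ((fun n : ℤ ↦ (U ^ n) f) '' Set.range ((↑) : ℕ → ℤ))).topologicalClosure := by
  simp only [cyclicSubspace, ← Set.range_comp, Function.comp_def, zpow_natCast]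

end CyclicSubspace

section InnerProductSpace

variable {𝕜 E : Type*} [RCLike 𝕜] [SeminormedAddCommGroup E] [InnerProductSpace 𝕜 E]
  {U : E ≃ₗᵢ[𝕜] E} {f : E}

theorem inner_inv_zpow_apply (U : E ≃ₗᵢ[𝕜] E) (f : E) (m n : ℤ) :
    ⟪(U⁻¹ ^ m) f, (U⁻¹ ^ n) f⟫_𝕜 = ⟪(U ^ n) f, (U ^ m) f⟫_𝕜 := by
  have hm : U ^ (m + n) * U⁻¹ ^ m = U ^ n := by group
  have hn : U ^ (m + n) * U⁻¹ ^ n = U ^ m := by group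
  calc ⟪(U⁻¹ ^ m) f, (U⁻¹ ^ n) f⟫_𝕜
      = ⟪(U ^ (m + n) * U⁻¹ ^ m) f, (U ^ (m + n) * U⁻¹ ^ n) f⟫_𝕜 :=
        ((U ^ (m + n)).inner_map_map _ _).symm
    _ = ⟪(U ^ n) f, (U ^ m) f⟫_𝕜 := by rw [hm, hn]

theorem apply_mem_cyclicSubspace_inv (hf : U⁻¹ f ∈ cyclicSubspace U f) :
    U f ∈ cyclicSubspace U⁻¹ f := by
  rw [cyclicSubspace_eq_closure_span_zpow] at hf ⊢
  simpa only [zpow_neg_one, inv_inv] using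
    mem_closure_span_image_of_inner_eq (inner_inv_zpow_apply U f) (i := -1)
      (by simpa only [zpow_neg_one] using hf)

theorem cyclic_subspace_eq_iff_inv_mem_general (U : E ≃ₗᵢ[𝕜] E) (f : E) :
    U⁻¹ f ∈ cyclicSubspace U f ↔ cyclicSubspace U f = cyclicSubspace U⁻¹ f := by
  refine ⟨fun hf ↦ le_antisymm ?_ (cyclicSubspace_inv_le_iff.2 hf),
    fun heq ↦ cyclicSubspace_inv_le_iff.1 heq.ge⟩
  have hle : cyclicSubspace U⁻¹⁻¹ f ≤ cyclicSubspace U⁻¹ f :=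
    cyclicSubspace_inv_le_iff.2 (apply_mem_cyclicSubspace_inv hf)
  rwa [inv_inv] at hle

end InnerProductSpace

/-- For a unitary operator `U` on a complex Hilbert space `H` and `f ∈ H`,
`U⁻¹ f` belongs to the closed linear span of `{Uⁿ f : n ≥ 0}` iff that closed span equals
the closed linear span of `{U⁻ⁿ f : n ≥ 0}`. -/
theorem cyclic_subspace_eq_iff_inv_mem
    {H : Type*} [NormedAddCommGroup H] [InnerProductSpace ℂ H] [CompleteSpace H]
    (U : H ≃ₗᵢ[ℂ] H) (f : H) :
    U.symm f ∈ (Submodule.span ℂ (Set.range fun n : ℕ => (U ^ n) f)).topologicalClosure ↔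
      (Submodule.span ℂ (Set.range fun n : ℕ => (U ^ n) f)).topologicalClosure =
        (Submodule.span ℂ (Set.range fun n : ℕ => (U⁻¹ ^ n) f)).topologicalClosure :=
  cyclic_subspace_eq_iff_inv_mem_general U f
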